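/- If S | F ~ S | R, S ⫫ F, and S ▷ R, then F ~ R. -/

import Mathlib

namespace CCS

/-- Process terms over a set of actions `A`. -/
inductive Proc (A : Type) where
  | nil : Proc A
  | pre : A → Proc A → Proc A
  | par : Proc A → Proc A → Proc A
  | repl : A → Proc A → Proc A

namespace Proc

/-- Finite processes: no occurrence of replication. -/
def IsFin {A : Type} : Proc A → Prop
  | nil => True
  | pre _ p => IsFin p
  | par p q => IsFin p ∧ IsFin q
  | repl _ _ => False

/-- Processes of the calculus: replication is applied only to prefixed
finite processes, at top level. -/
def Wf {A : Type} : Proc A → Prop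
  | nil => True
  | pre _ p => IsFin p
  | par p q => Wf p ∧ Wf q
  | repl _ p => IsFin p

/-- Size: the number of prefixes. -/
def size {A : Type} : Proc A → ℕ
  | nil => 0
  | pre _ p => size p + 1
  | par p q => size p + size q
  | repl _ p => size p + 1

/-- `reps n p` is the parallel composition of `n` copies of `p`. -/
def reps {A : Type} : ℕ → Proc A → Proc A
  | 0, _ => nil
  | n+1, p => par p (reps n p)

/-- `bang F` is `!F`: for `F = α₁.F₁ | ... | αk.Fk` it is `!α₁.F₁ | ... | !αk.Fk`. -/
def bang {A : Type} : Proc A → Proc A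
  | nil => nil
  | pre a p => repl a p
  | par p q => par (bang p) (bang q)
  | repl a p => repl a p

end Proc

/-- The labelled transition system (no synchronisation). -/
inductive Step {A : Type} : Proc A → A → Proc A → Prop where
  | pre {a : A} {p : Proc A} : Step (Proc.pre a p) a p
  | repl {a : A} {p : Proc A} :
      Step (Proc.repl a p) a (Proc.par (Proc.repl a p) p)
  | parL {p : Proc A} {a : A} {p' : Proc A} (q : Proc A) :
      Step p a p' → Step (Proc.par p q) a (Proc.par p' q)
  | parR {q : Proc A} {a : A} {q' : Proc A} (p : Proc A) :
      Step q a q' → Step (Proc.par p q) a (Proc.par p q')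

/-- Strong bisimulations. -/
def IsBisim {A : Type} (R : Proc A → Proc A → Prop) : Prop :=
  Symmetric R ∧
    ∀ p q, R p q → ∀ a p', Step p a p' → ∃ q', Step q a q' ∧ R p' q'

/-- Strong bisimilarity `~`: the greatest strong bisimulation. -/
def Bisim {A : Type} (p q : Proc A) : Prop :=
  ∃ R, IsBisim R ∧ R p q

/-- The congruence `≡D`: the smallest congruence generated by the abelian
monoid laws for parallel composition (neutral element `0`) and the
distribution law `α.(F | α.F | ... | α.F) = α.F | α.F | ... | α.F`
(with as many occurrences of `F` on both sides). -/
inductive EqD {A : Type} : Proc A → Proc A → Prop where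
  | refl (p : Proc A) : EqD p p
  | symm {p q : Proc A} : EqD p q → EqD q p
  | trans {p q r : Proc A} : EqD p q → EqD q r → EqD p r
  | parComm (p q : Proc A) : EqD (Proc.par p q) (Proc.par q p)
  | parAssoc (p q r : Proc A) :
      EqD (Proc.par (Proc.par p q) r) (Proc.par p (Proc.par q r))
  | parNil (p : Proc A) : EqD (Proc.par p Proc.nil) p
  | distr (a : A) (F : Proc A) (n : ℕ) (hF : F.IsFin) :
      EqD (Proc.pre a (Proc.par F (Proc.reps n (Proc.pre a F))))
          (Proc.reps (n + 1) (Proc.pre a F))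
  | congPre (a : A) {p q : Proc A} : EqD p q → EqD (Proc.pre a p) (Proc.pre a q)
  | congPar {p p' q q' : Proc A} :
      EqD p p' → EqD q q' → EqD (Proc.par p q) (Proc.par p' q')
  | congRepl (a : A) {p q : Proc A} : EqD p q → EqD (Proc.repl a p) (Proc.repl a q)

/-- Finite (single-hole) contexts `D ::= [] | α.D | D|F`. -/
inductive FCtx (A : Type) where
  | hole : FCtx A
  | pre : A → FCtx A → FCtx A
  | par : FCtx A → Proc A → FCtx A

/-- Filling the hole of a finite context. -/
def FCtx.fill {A : Type} : FCtx A → Proc A → Proc A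
  | .hole, p => p
  | .pre a d, p => Proc.pre a (d.fill p)
  | .par d f, p => Proc.par (d.fill p) f

/-- Well-formedness of a finite context: the processes placed in parallel
are finite. -/
def FCtx.Wf {A : Type} : FCtx A → Prop
  | .hole => True
  | .pre _ d => d.Wf
  | .par d f => d.Wf ∧ f.IsFin

/-- Single-hole contexts `C ::= D | !α.D | C|P` (the hole never occurs
directly under a replication). -/
inductive Ctx (A : Type) where
  | ofD : FCtx A → Ctx A
  | repl : A → FCtx A → Ctx A
  | par : Ctx A → Proc A → Ctx A

/-- Filling the hole of a context. -/
def Ctx.fill {A : Type} : Ctx A → Proc A → Proc A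
  | .ofD d, p => d.fill p
  | .repl a d, p => Proc.repl a (d.fill p)
  | .par c q, p => Proc.par (c.fill p) q

/-- Well-formedness of a context. -/
def Ctx.Wf {A : Type} : Ctx A → Prop
  | .ofD d => d.Wf
  | .repl _ d => d.Wf
  | .par c p => c.Wf ∧ p.Wf

/-- `k` consecutive transitions. -/
inductive NSteps {A : Type} : Proc A → ℕ → Proc A → Prop where
  | zero (p : Proc A) : NSteps p 0 p
  | succ {p : Proc A} {a : A} {p' : Proc A} {k : ℕ} {q : Proc A} :
      Step p a p' → NSteps p' k q → NSteps p (k + 1) q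

/-- `P ⇒k Q`: `k` transitions from `P` reach a process `≡D Q`. -/
def Reduct {A : Type} (p : Proc A) (k : ℕ) (q : Proc A) : Prop :=
  ∃ p', NSteps p k p' ∧ EqD p' q

/-- `TopRepl S a G` holds when `!a.G` is one of the (top-level) replicated
parallel components of `S`. -/
inductive TopRepl {A : Type} : Proc A → A → Proc A → Prop where
  | repl (a : A) (p : Proc A) : TopRepl (Proc.repl a p) a p
  | parL {p : Proc A} {a : A} {r : Proc A} (q : Proc A) :
      TopRepl p a r → TopRepl (Proc.par p q) a r
  | parR {q : Proc A} {a : A} {r : Proc A} (p : Proc A) :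
      TopRepl q a r → TopRepl (Proc.par p q) a r

/-- `S` has only replicated components: `S = ∏i !αi.Si`. -/
def ReplOnly {A : Type} : Proc A → Prop
  | .nil => True
  | .pre _ _ => False
  | .par p q => ReplOnly p ∧ ReplOnly q
  | .repl _ p => p.IsFin

/-- `S ⫫ F` : for no component `!αi.Si` of `S` and no `k` do we have
`F ⇒k αi.Si`. -/
def Dis {A : Type} (S F : Proc A) : Prop :=
  ∀ a G, TopRepl S a G → ∀ k, ¬ Reduct F k (Proc.pre a G)

/-- `S ▷ R` : there is `k > 0` with `S ⇒k S | R`. -/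
def Purg {A : Type} (S R : Proc A) : Prop :=
  ∃ k, 0 < k ∧ Reduct S k (Proc.par S R)

/-- A process is a seed if no (well-formed) process of strictly smaller
size is bisimilar to it. -/
def IsSeed {A : Type} (p : Proc A) : Prop :=
  p.Wf ∧ ∀ q : Proc A, q.Wf → Bisim q p → p.size ≤ q.size

/-- The rewriting relation `⤳_T` (first argument), defined modulo `≡D` by
the axioms (B1) `C[α.F] ⤳_{!α.F|F'} C[0]` and (B2) `!α.F | !α.F | P ⤳_Q !α.F | P`. -/
inductive Rw {A : Type} : Proc A → Proc A → Proc A → Prop where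
  | B1 {a : A} {F F' : Proc A} (C : Ctx A) :
      F.IsFin → F'.Wf → C.Wf →
      Rw (Proc.par (Proc.repl a F) F') (C.fill (Proc.pre a F)) (C.fill Proc.nil)
  | B2 {a : A} {F P Q : Proc A} :
      F.IsFin → P.Wf → Q.Wf →
      Rw Q (Proc.par (Proc.repl a F) (Proc.par (Proc.repl a F) P))
           (Proc.par (Proc.repl a F) P)
  | eqD {T T' P P' Q Q' : Proc A} :
      EqD T T' → EqD P P' → Rw T' P' Q' → EqD Q Q' → Rw T P Q

/-- `⤳*_T` : the reflexive transitive closure of `⤳_T`. -/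
def RwStar {A : Type} (T : Proc A) : Proc A → Proc A → Prop :=
  Relation.ReflTransGen (Rw T)

/-- Convertibility `P ⋈ Q`: some process `T` satisfies `P ⤳*_T T` and `Q ⤳*_T T`. -/
def Convert {A : Type} (P Q : Proc A) : Prop :=
  ∃ T : Proc A, T.Wf ∧ RwStar T P T ∧ RwStar T Q T

/-- `∏i αi.Fi` for a list of prefixed components. -/
def prodPre {A : Type} (l : List (A × Proc A)) : Proc A :=
  (l.map fun x => Proc.pre x.1 x.2).foldr Proc.par Proc.nil

/-- `∏i !αi.Fi` for a list of prefixed components. -/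
def bangProd {A : Type} (l : List (A × Proc A)) : Proc A :=
  (l.map fun x => Proc.repl x.1 x.2).foldr Proc.par Proc.nil

end CCS

/-!
Modulo bisimilarity, processes form an abelian monoid under parallel composition, on which the
transitions act. Call a finite behaviour *reduced* if nothing nonzero that it can reach is absorbed
by `S`.

* If the components of `S` are reduced, then `S + x = S + y` implies `x = y` for reduced `x`, `y`,
  by induction on the smaller size: if a move `x → x'` of the smaller side were answered by a
  component `!α.G`, then `x' = G + y` by induction, which is too large. So `x` and `y` have the
  same moves.
* Absorption by `S` is inherited by summands. Hence if no prefix of a process is absorbed by `S`,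
  its behaviour is reduced. A seed contains no absorbed prefix, since erasing one would give a
  smaller bisimilar process; transitions and `≡D` preserve this property, so `S ▷ R` transfers it
  to `R`.
* `F` is reduced as well: if it reached something absorbed, it would reach an absorbed prefix `α.Q`,
  whose residual satisfies `S + Q = S + G` for a component `!α.G` of `S`; by induction `Q` is
  reduced, so `Q = G` and `F` reaches `α.G`. Because finite behaviours decompose uniquely into
  indecomposable ones, `≡D` is complete for finite processes, so this contradicts `S ⫫ F`.
-/

namespace CCS

open Proc

variable {A : Type}

/-- An equivalence on processes that respects parallel composition and makes it an abelian monoid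
operation. Both bisimilarity and `≡D` are of this kind. -/
structure ParCongr (A : Type) extends Setoid (Proc A) where
  par_congr : ∀ {p p' q q'}, r p p' → r q q' → r (par p q) (par p' q')
  par_comm : ∀ p q, r (par p q) (par q p)
  par_assoc : ∀ p q s, r (par (par p q) s) (par p (par q s))
  par_nil : ∀ p, r (par p nil) p

/-- The abelian monoid of classes of a `ParCongr`, whose addition is parallel composition. -/
def ParCongr.Classes (c : ParCongr A) : Type := Quotient c.toSetoid

instance (c : ParCongr A) : Add c.Classes :=
  ⟨Quotient.map₂ par fun _ _ hp _ _ hq => c.par_congr hp hq⟩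

instance (c : ParCongr A) : Zero c.Classes := ⟨Quotient.mk _ nil⟩

instance (c : ParCongr A) : AddCommMonoid c.Classes where
  add_assoc := by
    rintro ⟨p⟩ ⟨q⟩ ⟨s⟩
    exact Quotient.sound (c.par_assoc p q s)
  add_comm := by
    rintro ⟨p⟩ ⟨q⟩
    exact Quotient.sound (c.par_comm p q)
  add_zero := by
    rintro ⟨p⟩
    exact Quotient.sound (c.par_nil p)
  zero_add := by
    rintro ⟨p⟩
    exact Quotient.sound (c.trans (c.par_comm nil p) (c.par_nil p))
  nsmul := nsmulRec

namespace ParCongr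

variable (c : ParCongr A)

/-- The class of a process. -/
def classOf (p : Proc A) : c.Classes := Quotient.mk _ p

variable {c} in
theorem classOf_eq_classOf {p q : Proc A} : c.classOf p = c.classOf q ↔ c.r p q :=
  ⟨Quotient.exact, Quotient.sound (s := c.toSetoid)⟩

theorem classOf_par (p q : Proc A) : c.classOf (par p q) = c.classOf p + c.classOf q := rfl

theorem classOf_reps (n : ℕ) (p : Proc A) : c.classOf (reps n p) = n • c.classOf p := by
  induction n with
  | zero => rw [zero_nsmul]; rfl
  | succ n ih => rw [succ_nsmul', reps, classOf_par, ih]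

end ParCongr

/-! ### The monoid of behaviours -/

theorem Bisim.refl (p : Proc A) : Bisim p p :=
  ⟨Eq, ⟨fun _ _ h => h.symm, by rintro p _ rfl a p' hp; exact ⟨p', hp, rfl⟩⟩, rfl⟩

theorem Bisim.symm {p q : Proc A} : Bisim p q → Bisim q p :=
  fun ⟨R, hR, h⟩ => ⟨R, hR, hR.1 h⟩

theorem Bisim.exists_step {p q p' : Proc A} {a : A} (h : Bisim p q) (hp : Step p a p') :
    ∃ q', Step q a q' ∧ Bisim p' q' := by
  obtain ⟨R, hR, hpq⟩ := h
  obtain ⟨q', hq, hpq'⟩ := hR.2 p q hpq a p' hp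
  exact ⟨q', hq, R, hR, hpq'⟩

theorem Bisim.trans {p q s : Proc A} (hpq : Bisim p q) (hqs : Bisim q s) : Bisim p s := by
  refine ⟨fun x z => ∃ y, Bisim x y ∧ Bisim y z, ⟨?_, ?_⟩, q, hpq, hqs⟩
  · rintro x z ⟨y, hxy, hyz⟩
    exact ⟨y, hyz.symm, hxy.symm⟩
  · rintro x z ⟨y, hxy, hyz⟩ a x' hx
    obtain ⟨y', hy, hxy'⟩ := hxy.exists_step hx
    obtain ⟨z', hz, hyz'⟩ := hyz.exists_step hy
    exact ⟨z', hz, y', hxy', hyz'⟩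

theorem Bisim.of_simulations (R : Proc A → Proc A → Prop)
    (forth : ∀ p q, R p q → ∀ a p', Step p a p' → ∃ q', Step q a q' ∧ R p' q')
    (back : ∀ p q, R p q → ∀ a q', Step q a q' → ∃ p', Step p a p' ∧ R p' q')
    {p q : Proc A} (h : R p q) : Bisim p q := by
  refine ⟨fun x y => R x y ∨ R y x, ⟨fun _ _ => Or.symm, ?_⟩, .inl h⟩
  rintro x y (hxy | hyx) a x' hx
  · obtain ⟨y', hy, hxy'⟩ := forth x y hxy a x' hx
    exact ⟨y', hy, .inl hxy'⟩
  · obtain ⟨y', hy, hyx'⟩ := back y x hyx a x' hx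
    exact ⟨y', hy, .inr hyx'⟩

theorem Bisim.par_congr {p p' q q' : Proc A} (hp : Bisim p p') (hq : Bisim q q') :
    Bisim (par p q) (par p' q') := by
  refine ⟨fun x y => ∃ p q p' q', x = par p q ∧ y = par p' q' ∧ Bisim p p' ∧ Bisim q q',
    ⟨?_, ?_⟩, _, _, _, _, rfl, rfl, hp, hq⟩
  · rintro x y ⟨p, q, p', q', rfl, rfl, hp, hq⟩
    exact ⟨_, _, _, _, rfl, rfl, hp.symm, hq.symm⟩
  · rintro x y ⟨p, q, p', q', rfl, rfl, hp, hq⟩ a x' hx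
    cases hx with
    | parL _ h =>
      obtain ⟨r, hr, hb⟩ := hp.exists_step h
      exact ⟨_, .parL _ hr, _, _, _, _, rfl, rfl, hb, hq⟩
    | parR _ h =>
      obtain ⟨r, hr, hb⟩ := hq.exists_step h
      exact ⟨_, .parR _ hr, _, _, _, _, rfl, rfl, hp, hb⟩

theorem Bisim.par_comm (p q : Proc A) : Bisim (par p q) (par q p) := by
  refine ⟨fun x y => ∃ p q, x = par p q ∧ y = par q p, ⟨?_, ?_⟩, p, q, rfl, rfl⟩
  · rintro x y ⟨p, q, rfl, rfl⟩
    exact ⟨q, p, rfl, rfl⟩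
  · rintro x y ⟨p, q, rfl, rfl⟩ a x' hx
    cases hx with
    | parL _ h => exact ⟨_, .parR _ h, _, _, rfl, rfl⟩
    | parR _ h => exact ⟨_, .parL _ h, _, _, rfl, rfl⟩

theorem Bisim.par_assoc (p q s : Proc A) : Bisim (par (par p q) s) (par p (par q s)) := by
  refine .of_simulations (fun x y => ∃ p q s, x = par (par p q) s ∧ y = par p (par q s))
    ?_ ?_ ⟨p, q, s, rfl, rfl⟩
  · rintro x y ⟨p, q, s, rfl, rfl⟩ a x' hx
    rcases hx with _ | _ | ⟨_, _ | _ | ⟨_, h⟩ | ⟨_, h⟩⟩ | ⟨_, h⟩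
    · exact ⟨_, .parL _ h, _, _, _, rfl, rfl⟩
    · exact ⟨_, .parR _ (.parL _ h), _, _, _, rfl, rfl⟩
    · exact ⟨_, .parR _ (.parR _ h), _, _, _, rfl, rfl⟩
  · rintro x y ⟨p, q, s, rfl, rfl⟩ a y' hy
    rcases hy with _ | _ | ⟨_, h⟩ | ⟨_, _ | _ | ⟨_, h⟩ | ⟨_, h⟩⟩
    · exact ⟨_, .parL _ (.parL _ h), _, _, _, rfl, rfl⟩
    · exact ⟨_, .parL _ (.parR _ h), _, _, _, rfl, rfl⟩
    · exact ⟨_, .parR _ h, _, _, _, rfl, rfl⟩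

theorem Bisim.par_nil (p : Proc A) : Bisim (par p nil) p := by
  refine .of_simulations (fun x y => x = par y nil) ?_ ?_ rfl
  · rintro x y rfl a x' hx
    cases hx with
    | parL _ h => exact ⟨_, h, rfl⟩
    | parR _ h => cases h
  · rintro x y rfl a y' hy
    exact ⟨_, .parL _ hy, rfl⟩

/-- Bisimilarity as a `ParCongr`. -/
def bisimCongr (A : Type) : ParCongr A where
  r := Bisim
  iseqv := ⟨.refl, .symm, .trans⟩
  par_congr := .par_congr
  par_comm := .par_comm
  par_assoc := .par_assoc
  par_nil := .par_nil

/-- Behaviours: processes up to bisimilarity, with parallel composition as addition. -/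
def Behaviour (A : Type) : Type := (bisimCongr A).Classes

instance : AddCommMonoid (Behaviour A) := inferInstanceAs (AddCommMonoid (bisimCongr A).Classes)

/-- The behaviour of a process, written `⟪p⟫`. -/
def Behaviour.mk (p : Proc A) : Behaviour A := (bisimCongr A).classOf p

local notation "⟪" p "⟫" => Behaviour.mk p

theorem Behaviour.mk_eq_mk {p q : Proc A} : ⟪p⟫ = ⟪q⟫ ↔ Bisim p q :=
  ParCongr.classOf_eq_classOf

theorem Behaviour.exists_mk_eq (x : Behaviour A) : ∃ p, ⟪p⟫ = x := Quotient.exists_rep x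

theorem Behaviour.mk_par (p q : Proc A) : ⟪par p q⟫ = ⟪p⟫ + ⟪q⟫ := rfl

theorem Behaviour.mk_nil : ⟪(nil : Proc A)⟫ = 0 := rfl

theorem Behaviour.mk_reps (n : ℕ) (p : Proc A) : ⟪reps n p⟫ = n • ⟪p⟫ :=
  (bisimCongr A).classOf_reps n p

/-- The transitions that bisimilarity induces on behaviours. -/
def Behaviour.Move (x : Behaviour A) (a : A) (y : Behaviour A) : Prop :=
  ∃ p p', ⟪p⟫ = x ∧ Step p a p' ∧ ⟪p'⟫ = y

theorem move_mk_iff {p : Proc A} {a : A} {y : Behaviour A} :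
    ⟪p⟫.Move a y ↔ ∃ p', Step p a p' ∧ ⟪p'⟫ = y := by
  constructor
  · rintro ⟨q, q', hqp, hq, rfl⟩
    obtain ⟨p', hp, hb⟩ := (Behaviour.mk_eq_mk.1 hqp).exists_step hq
    exact ⟨p', hp, (Behaviour.mk_eq_mk.2 hb).symm⟩
  · rintro ⟨p', hp, rfl⟩
    exact ⟨p, p', rfl, hp, rfl⟩

theorem Step.move {p p' : Proc A} {a : A} (h : Step p a p') : ⟪p⟫.Move a ⟪p'⟫ :=
  ⟨p, p', rfl, h, rfl⟩

namespace Behaviour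

theorem not_move_zero {a : A} {y : Behaviour A} : ¬ (0 : Behaviour A).Move a y := by
  rw [← mk_nil, move_mk_iff]
  rintro ⟨_, h, -⟩
  cases h

theorem move_pre_iff {a b : A} {p : Proc A} {y : Behaviour A} :
    ⟪pre a p⟫.Move b y ↔ b = a ∧ y = ⟪p⟫ := by
  rw [move_mk_iff]
  constructor
  · rintro ⟨_, h, rfl⟩
    cases h
    exact ⟨rfl, rfl⟩
  · rintro ⟨rfl, rfl⟩
    exact ⟨_, .pre, rfl⟩

theorem move_pre (a : A) (p : Proc A) : ⟪pre a p⟫.Move a ⟪p⟫ := Step.pre.move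

theorem move_repl_iff {a b : A} {p : Proc A} {y : Behaviour A} :
    ⟪repl a p⟫.Move b y ↔ b = a ∧ y = ⟪repl a p⟫ + ⟪p⟫ := by
  rw [move_mk_iff]
  constructor
  · rintro ⟨_, h, rfl⟩
    cases h
    exact ⟨rfl, rfl⟩
  · rintro ⟨rfl, rfl⟩
    exact ⟨_, .repl, rfl⟩

theorem move_repl (a : A) (p : Proc A) : ⟪repl a p⟫.Move a (⟪repl a p⟫ + ⟪p⟫) := Step.repl.move

theorem move_add_iff {x y z : Behaviour A} {a : A} :
    (x + y).Move a z ↔ (∃ x', x.Move a x' ∧ z = x' + y) ∨ ∃ y', y.Move a y' ∧ z = x + y' := by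
  obtain ⟨p, rfl⟩ := exists_mk_eq x
  obtain ⟨q, rfl⟩ := exists_mk_eq y
  rw [← mk_par]
  constructor
  · rw [move_mk_iff]
    rintro ⟨_, hpq, rfl⟩
    cases hpq with
    | parL _ h => exact .inl ⟨_, h.move, rfl⟩
    | parR _ h => exact .inr ⟨_, h.move, rfl⟩
  · rintro (⟨x', hx, rfl⟩ | ⟨y', hy, rfl⟩)
    · obtain ⟨p', hp, rfl⟩ := move_mk_iff.1 hx
      exact (Step.parL q hp).move
    · obtain ⟨q', hq, rfl⟩ := move_mk_iff.1 hy
      exact (Step.parR p hq).move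

theorem Move.add_right {x x' : Behaviour A} {a : A} (h : x.Move a x') (y : Behaviour A) :
    (x + y).Move a (x' + y) :=
  move_add_iff.2 (.inl ⟨x', h, rfl⟩)

theorem Move.add_left {x x' : Behaviour A} {a : A} (h : x.Move a x') (y : Behaviour A) :
    (y + x).Move a (y + x') :=
  move_add_iff.2 (.inr ⟨x', h, rfl⟩)

theorem eq_of_simulations (R : Behaviour A → Behaviour A → Prop)
    (forth : ∀ x y, R x y → ∀ a x', x.Move a x' → ∃ y', y.Move a y' ∧ (x' = y' ∨ R x' y'))
    (back : ∀ x y, R x y → ∀ a y', y.Move a y' → ∃ x', x.Move a x' ∧ (x' = y' ∨ R x' y'))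
    {x y : Behaviour A} (h : R x y) : x = y := by
  obtain ⟨p, rfl⟩ := exists_mk_eq x
  obtain ⟨q, rfl⟩ := exists_mk_eq y
  refine mk_eq_mk.2 (.of_simulations (fun p q => ⟪p⟫ = ⟪q⟫ ∨ R ⟪p⟫ ⟪q⟫) ?_ ?_ (.inr h))
  · rintro p q (hpq | hpq) a p' hp
    · obtain ⟨q', hq, hq'⟩ := move_mk_iff.1 (hpq ▸ hp.move)
      exact ⟨q', hq, .inl hq'.symm⟩
    · obtain ⟨_, hy, hR⟩ := forth _ _ hpq a _ hp.move
      obtain ⟨q', hq, rfl⟩ := move_mk_iff.1 hy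
      exact ⟨q', hq, hR⟩
  · rintro p q (hpq | hpq) a q' hq
    · obtain ⟨p', hp, hp'⟩ := move_mk_iff.1 (hpq ▸ hq.move)
      exact ⟨p', hp, .inl hp'⟩
    · obtain ⟨_, hx, hR⟩ := back _ _ hpq a _ hq.move
      obtain ⟨p', hp, rfl⟩ := move_mk_iff.1 hx
      exact ⟨p', hp, hR⟩

theorem eq_of_symm_simulation (R : Behaviour A → Behaviour A → Prop)
    (symm : ∀ x y, R x y → R y x)
    (forth : ∀ x y, R x y → ∀ a x', x.Move a x' → ∃ y', y.Move a y' ∧ (x' = y' ∨ R x' y'))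
    {x y : Behaviour A} (h : R x y) : x = y := by
  refine eq_of_simulations R forth (fun x y hxy a y' hy => ?_) h
  obtain ⟨x', hx, hyx⟩ := forth y x (symm x y hxy) a y' hy
  exact ⟨x', hx, hyx.imp Eq.symm (symm y' x')⟩

theorem ext_move {x y : Behaviour A} (h : ∀ a z, x.Move a z ↔ y.Move a z) : x = y :=
  eq_of_simulations (fun u v => u = x ∧ v = y)
    (by rintro _ _ ⟨rfl, rfl⟩ a z hz; exact ⟨z, (h a z).1 hz, .inl rfl⟩)
    (by rintro _ _ ⟨rfl, rfl⟩ a z hz; exact ⟨z, (h a z).2 hz, .inl rfl⟩) ⟨rfl, rfl⟩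

theorem mk_pre_congr (a : A) {p q : Proc A} (h : ⟪p⟫ = ⟪q⟫) : ⟪pre a p⟫ = ⟪pre a q⟫ :=
  ext_move fun b z => by rw [move_pre_iff, move_pre_iff, h]

theorem move_succ_nsmul_iff {n : ℕ} {x z : Behaviour A} {a : A} :
    ((n + 1) • x).Move a z ↔ ∃ x', x.Move a x' ∧ z = x' + n • x := by
  induction n generalizing z with
  | zero => simp
  | succ n ih =>
    rw [succ_nsmul, move_add_iff]
    constructor
    · rintro (⟨y, hy, rfl⟩ | ⟨x', hx, rfl⟩)
      · obtain ⟨x', hx, rfl⟩ := ih.1 hy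
        exact ⟨x', hx, by rw [succ_nsmul, add_assoc]⟩
      · exact ⟨x', hx, add_comm _ _⟩
    · rintro ⟨x', hx, rfl⟩
      exact .inr ⟨x', hx, add_comm _ _⟩

theorem mk_pre_par_reps (a : A) (p : Proc A) (n : ℕ) :
    ⟪pre a (par p (reps n (pre a p)))⟫ = (n + 1) • ⟪pre a p⟫ := by
  refine ext_move fun b z => ?_
  rw [move_succ_nsmul_iff, move_pre_iff, mk_par, mk_reps]
  constructor
  · rintro ⟨rfl, rfl⟩
    exact ⟨_, move_pre b p, rfl⟩
  · rintro ⟨_, h, rfl⟩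
    obtain ⟨rfl, rfl⟩ := move_pre_iff.1 h
    exact ⟨rfl, rfl⟩

end Behaviour

/-! ### Finite behaviours -/

theorem Proc.IsFin.of_step {p p' : Proc A} {a : A} (hp : p.IsFin) (h : Step p a p') :
    p'.IsFin := by
  induction h with
  | pre => exact hp
  | repl => exact hp.elim
  | parL _ _ ih => exact ⟨ih hp.1, hp.2⟩
  | parR _ _ ih => exact ⟨hp.1, ih hp.2⟩

theorem Proc.IsFin.size_of_step {p p' : Proc A} {a : A} (hp : p.IsFin) (h : Step p a p') :
    p.size = p'.size + 1 := by
  induction h with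
  | pre => rfl
  | repl => exact hp.elim
  | parL _ _ ih =>
    have := ih hp.1
    simp only [size]
    lia
  | parR _ _ ih =>
    have := ih hp.2
    simp only [size]
    lia

theorem Proc.IsFin.exists_step {p : Proc A} (hp : p.IsFin) (h : p.size ≠ 0) :
    ∃ a p', Step p a p' := by
  induction p with
  | nil => exact absurd rfl h
  | pre a p => exact ⟨a, p, .pre⟩
  | repl => exact hp.elim
  | par p q ihp ihq =>
    by_cases hp0 : p.size = 0
    · obtain ⟨a, q', hq'⟩ := ihq hp.2 fun hq0 => h (by rw [size, hp0, hq0])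
      exact ⟨a, _, .parR p hq'⟩
    · obtain ⟨a, p', hp'⟩ := ihp hp.1 hp0
      exact ⟨a, _, .parL q hp'⟩

theorem Bisim.size_eq {p q : Proc A} (h : Bisim p q) (hp : p.IsFin) (hq : q.IsFin) :
    p.size = q.size := by
  induction hn : p.size generalizing p q with
  | zero =>
    by_contra hq0
    obtain ⟨a, q', hqq'⟩ := hq.exists_step (Ne.symm hq0)
    obtain ⟨p', hpp', -⟩ := h.symm.exists_step hqq'
    have := hp.size_of_step hpp'
    lia
  | succ n ih =>
    obtain ⟨a, p', hpp'⟩ := hp.exists_step (by lia)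
    obtain ⟨q', hqq', h'⟩ := h.exists_step hpp'
    have hpn := hp.size_of_step hpp'
    have hqn := hq.size_of_step hqq'
    have := ih h' (hp.of_step hpp') (hq.of_step hqq') (by lia)
    lia

namespace Behaviour

/-- Behaviours of finite processes. -/
def IsFin (x : Behaviour A) : Prop := ∃ p : Proc A, p.IsFin ∧ ⟪p⟫ = x

/-- The common size of the finite processes with behaviour `x`; the junk value is `0` when there
are none. -/
noncomputable def size (x : Behaviour A) : ℕ :=
  sInf {n | ∃ p : Proc A, p.IsFin ∧ ⟪p⟫ = x ∧ p.size = n}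

theorem isFin_mk {p : Proc A} (hp : p.IsFin) : IsFin ⟪p⟫ := ⟨p, hp, rfl⟩

theorem size_mk {p : Proc A} (hp : p.IsFin) : size ⟪p⟫ = p.size := by
  have hsingleton : {n | ∃ q : Proc A, q.IsFin ∧ ⟪q⟫ = ⟪p⟫ ∧ q.size = n} = {p.size} := by
    ext n
    constructor
    · rintro ⟨q, hq, hqp, rfl⟩
      exact (mk_eq_mk.1 hqp).size_eq hq hp
    · rintro rfl
      exact ⟨p, hp, rfl, rfl⟩
  rw [size, hsingleton, csInf_singleton]

theorem isFin_zero : IsFin (0 : Behaviour A) := ⟨nil, trivial, rfl⟩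

theorem size_zero : size (0 : Behaviour A) = 0 := size_mk (p := nil) trivial

theorem size_mk_pre (a : A) {p : Proc A} (hp : p.IsFin) : size ⟪pre a p⟫ = size ⟪p⟫ + 1 := by
  rw [size_mk (p := pre a p) hp, size_mk hp, Proc.size]

theorem IsFin.add {x y : Behaviour A} (hx : x.IsFin) (hy : y.IsFin) : (x + y).IsFin := by
  obtain ⟨p, hp, rfl⟩ := hx
  obtain ⟨q, hq, rfl⟩ := hy
  exact ⟨par p q, ⟨hp, hq⟩, rfl⟩

theorem IsFin.size_add {x y : Behaviour A} (hx : x.IsFin) (hy : y.IsFin) :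
    (x + y).size = x.size + y.size := by
  obtain ⟨p, hp, rfl⟩ := hx
  obtain ⟨q, hq, rfl⟩ := hy
  rw [← mk_par, size_mk (p := par p q) ⟨hp, hq⟩, size_mk hp, size_mk hq, Proc.size]

theorem IsFin.of_move {x x' : Behaviour A} {a : A} (hx : x.IsFin) (h : x.Move a x') :
    x'.IsFin := by
  obtain ⟨p, hp, rfl⟩ := hx
  obtain ⟨p', hpp', rfl⟩ := move_mk_iff.1 h
  exact ⟨p', hp.of_step hpp', rfl⟩

theorem IsFin.size_of_move {x x' : Behaviour A} {a : A} (hx : x.IsFin) (h : x.Move a x') :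
    x.size = x'.size + 1 := by
  obtain ⟨p, hp, rfl⟩ := hx
  obtain ⟨p', hpp', rfl⟩ := move_mk_iff.1 h
  rw [size_mk hp, size_mk (hp.of_step hpp'), hp.size_of_step hpp']

theorem IsFin.exists_eq_pre_add {x : Behaviour A} (hx : x.IsFin) (hx0 : x ≠ 0) :
    ∃ a p w, p.IsFin ∧ w.IsFin ∧ x = ⟪pre a p⟫ + w := by
  obtain ⟨p, hp, rfl⟩ := hx
  induction p with
  | nil => exact absurd rfl hx0
  | pre a p => exact ⟨a, p, 0, hp, isFin_zero, (add_zero _).symm⟩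
  | repl => exact hp.elim
  | par p q ihp ihq =>
    by_cases hp0 : ⟪p⟫ = 0
    · rw [mk_par, hp0, zero_add] at hx0 ⊢
      exact ihq hp.2 hx0
    · obtain ⟨a, r, w, hr, hw, hpw⟩ := ihp hp.1 hp0
      exact ⟨a, r, w + ⟪q⟫, hr, hw.add (isFin_mk hp.2), by rw [mk_par, hpw, add_assoc]⟩

theorem IsFin.exists_move {x : Behaviour A} (hx : x.IsFin) (hx0 : x ≠ 0) :
    ∃ a x', x.Move a x' := by
  obtain ⟨a, p, w, -, -, rfl⟩ := hx.exists_eq_pre_add hx0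
  exact ⟨a, _, (move_pre a p).add_right w⟩

theorem mk_pre_ne_zero (a : A) (p : Proc A) : ⟪pre a p⟫ ≠ 0 :=
  fun h => not_move_zero (h ▸ move_pre a p)

theorem IsFin.eq_zero_of_size {x : Behaviour A} (hx : x.IsFin) (h : x.size = 0) : x = 0 := by
  by_contra hx0
  obtain ⟨a, x', hxx'⟩ := hx.exists_move hx0
  have := hx.size_of_move hxx'
  lia

theorem IsFin.size_pos {x : Behaviour A} (hx : x.IsFin) (hx0 : x ≠ 0) : 0 < x.size :=
  Nat.pos_of_ne_zero fun h => hx0 (hx.eq_zero_of_size h)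

/-! ### Unique decomposition of finite behaviours -/

/-- A nonzero finite behaviour that is not the sum of two nonzero finite behaviours. -/
def Indecomposable (x : Behaviour A) : Prop :=
  x.IsFin ∧ x ≠ 0 ∧ ∀ y z, y.IsFin → z.IsFin → x = y + z → y = 0 ∨ z = 0

theorem Indecomposable.exists_eq_pre {x : Behaviour A} (hx : Indecomposable x) :
    ∃ a p, p.IsFin ∧ x = ⟪pre a p⟫ := by
  obtain ⟨a, p, w, hp, hw, rfl⟩ := hx.1.exists_eq_pre_add hx.2.1
  have hw0 : w = 0 :=
    (hx.2.2 _ w (isFin_mk (p := pre a p) hp) hw rfl).resolve_left (mk_pre_ne_zero a p)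
  exact ⟨a, p, hp, by rw [hw0, add_zero]⟩

theorem Indecomposable.move_unique {x y z : Behaviour A} {a b : A} (hx : Indecomposable x)
    (hy : x.Move a y) (hz : x.Move b z) : y = z := by
  obtain ⟨c, p, -, rfl⟩ := hx.exists_eq_pre
  rw [(move_pre_iff.1 hy).2, (move_pre_iff.1 hz).2]

theorem IsFin.exists_indecomposable_sum {x : Behaviour A} (hx : x.IsFin) :
    ∃ s : Multiset (Behaviour A), (∀ y ∈ s, Indecomposable y) ∧ s.sum = x := by
  induction hn : x.size using Nat.strong_induction_on generalizing x with | _ n ih =>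
  by_cases hx0 : x = 0
  · exact ⟨0, by simp, by simp [hx0]⟩
  by_cases hind : Indecomposable x
  · exact ⟨{x}, by simpa using hind, by simp⟩
  obtain ⟨y, z, hy, hz, rfl, hy0, hz0⟩ :
      ∃ y z, IsFin y ∧ IsFin z ∧ x = y + z ∧ y ≠ 0 ∧ z ≠ 0 := by
    by_contra! h
    exact hind ⟨hx, hx0, fun y z hy hz hyz => or_iff_not_imp_left.2 (h y z hy hz hyz)⟩
  have hsize := hy.size_add hz
  have hypos := hy.size_pos hy0
  have hzpos := hz.size_pos hz0
  obtain ⟨s, hs, rfl⟩ := ih _ (by lia) hy rfl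
  obtain ⟨t, ht, rfl⟩ := ih _ (by lia) hz rfl
  exact ⟨s + t, fun y hy => (Multiset.mem_add.1 hy).elim (hs y) (ht y), Multiset.sum_add s t⟩

theorem isFin_sum {s : Multiset (Behaviour A)} (hs : ∀ x ∈ s, IsFin x) : s.sum.IsFin :=
  Multiset.sum_induction IsFin s (fun _ _ => IsFin.add) isFin_zero hs

noncomputable instance : DecidableEq (Behaviour A) := Classical.decEq _

theorem size_le_size_sum {s : Multiset (Behaviour A)} (hs : ∀ x ∈ s, IsFin x)
    {x : Behaviour A} (hx : x ∈ s) : x.size ≤ s.sum.size := by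
  have hrest : (s.erase x).sum.IsFin := isFin_sum fun y hy => hs y (Multiset.mem_of_mem_erase hy)
  rw [← Multiset.sum_erase hx, (hs x hx).size_add hrest]
  exact Nat.le_add_right _ _

theorem exists_mem_of_sum_move {s : Multiset (Behaviour A)} {a : A} {z : Behaviour A}
    (h : s.sum.Move a z) : ∃ x ∈ s, ∃ x', x.Move a x' ∧ z = x' + (s.erase x).sum := by
  induction s using Multiset.induction_on generalizing z with
  | empty => exact absurd h not_move_zero
  | cons y s ih =>
    rw [Multiset.sum_cons] at h
    obtain ⟨y', hy, rfl⟩ | ⟨w, hw, rfl⟩ := move_add_iff.1 h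
    · exact ⟨y, Multiset.mem_cons_self y s, y', hy, by rw [Multiset.erase_cons_head]⟩
    · obtain ⟨x, hx, x', hxx', rfl⟩ := ih hw
      refine ⟨x, Multiset.mem_cons_of_mem hx, x', hxx', ?_⟩
      rw [Multiset.erase_cons_tail_of_mem hx, Multiset.sum_cons, add_left_comm]

theorem move_sum_of_mem {s : Multiset (Behaviour A)} {x x' : Behaviour A} {a : A} (hx : x ∈ s)
    (h : x.Move a x') : s.sum.Move a (x' + (s.erase x).sum) := by
  rw [← Multiset.sum_erase hx]
  exact h.add_right _

open scoped Classical in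
/-- The indecomposable summands of a finite behaviour, with multiplicities; the junk value is `0`
if `x` is not finite. They are unique by `eq_of_sum_eq_sum`. -/
noncomputable def factors (x : Behaviour A) : Multiset (Behaviour A) :=
  if hx : x.IsFin then hx.exists_indecomposable_sum.choose else 0

theorem indecomposable_of_mem_factors {x y : Behaviour A} (h : y ∈ factors x) :
    Indecomposable y := by
  unfold factors at h
  split at h
  · next hx => exact hx.exists_indecomposable_sum.choose_spec.1 y h
  · exact absurd h (Multiset.notMem_zero y)

theorem IsFin.sum_factors {x : Behaviour A} (hx : x.IsFin) : (factors x).sum = x := by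
  rw [factors, dif_pos hx]
  exact hx.exists_indecomposable_sum.choose_spec.2

theorem IsFin.notMem_factors {x y : Behaviour A} (hx : x.IsFin) (h : x.size < y.size) :
    y ∉ factors x := fun hy => by
  have := size_le_size_sum (fun _ hz => (indecomposable_of_mem_factors hz).1) hy
  rw [hx.sum_factors] at this
  lia

section Uniqueness

variable {s t : Multiset (Behaviour A)} {m : Behaviour A}

/-- Unique decomposition below a given size, the induction hypothesis of `eq_of_sum_eq_sum`. -/
def UniqueFactorsBelow (A : Type) (n : ℕ) : Prop :=
  ∀ s t : Multiset (Behaviour A), (∀ x ∈ s, Indecomposable x) → (∀ x ∈ t, Indecomposable x) →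
    s.sum.size < n → s.sum = t.sum → s = t

theorem exists_erase_add_factors_eq (hs : ∀ x ∈ s, Indecomposable x)
    (ht : ∀ x ∈ t, Indecomposable x) (h : s.sum = t.sum)
    (unique : UniqueFactorsBelow A s.sum.size) {x : Behaviour A} (hx : x ∈ s) :
    ∃ y ∈ t, ∃ a x' y', x.Move a x' ∧ y.Move a y' ∧
      s.erase x + factors x' = t.erase y + factors y' := by
  obtain ⟨a, x', hxx'⟩ := (hs x hx).1.exists_move (hs x hx).2.1
  have hmove := move_sum_of_mem hx hxx'
  obtain ⟨y, hy, y', hyy', hsum⟩ := exists_mem_of_sum_move (h ▸ hmove)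
  have hsum_x : (s.erase x + factors x').sum = x' + (s.erase x).sum := by
    rw [Multiset.sum_add, ((hs x hx).1.of_move hxx').sum_factors, add_comm]
  have hsum_y : (t.erase y + factors y').sum = y' + (t.erase y).sum := by
    rw [Multiset.sum_add, ((ht y hy).1.of_move hyy').sum_factors, add_comm]
  refine ⟨y, hy, a, x', y', hxx', hyy', unique _ _ ?_ ?_ ?_ (by rw [hsum_x, hsum_y, hsum])⟩
  · exact fun z hz => (Multiset.mem_add.1 hz).elim (fun h => hs z (Multiset.mem_of_mem_erase h))
      indecomposable_of_mem_factors
  · exact fun z hz => (Multiset.mem_add.1 hz).elim (fun h => ht z (Multiset.mem_of_mem_erase h))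
      indecomposable_of_mem_factors
  · rw [hsum_x, (isFin_sum fun z hz => (hs z hz).1).size_of_move hmove]
    exact Nat.lt_succ_self _

/-- A behaviour `m` of maximal size cannot be a factor of a residual, so moving a summand leaves
the multiplicity of `m` unchanged except for the moved summand itself. -/
theorem exists_count_erase_eq (hs : ∀ x ∈ s, Indecomposable x)
    (ht : ∀ x ∈ t, Indecomposable x) (h : s.sum = t.sum)
    (unique : UniqueFactorsBelow A s.sum.size) (hne : s ≠ t)
    (hsm : ∀ x ∈ s, x.size ≤ m.size) (htm : ∀ x ∈ t, x.size ≤ m.size)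
    {x : Behaviour A} (hx : x ∈ s) :
    ∃ y ∈ t, y ≠ x ∧ (s.erase x).count m = (t.erase y).count m := by
  obtain ⟨y, hy, a, x', y', hxx', hyy', heq⟩ := exists_erase_add_factors_eq hs ht h unique hx
  refine ⟨y, hy, ?_, ?_⟩
  · rintro rfl
    rw [(hs y hx).move_unique hxx' hyy', add_left_inj] at heq
    exact hne (by rw [← Multiset.cons_erase hx, heq, Multiset.cons_erase hy])
  · have hcount {z z' : Behaviour A} (hz : z.IsFin) (hzz' : z.Move a z') (hzm : z.size ≤ m.size) :
        (factors z').count m = 0 :=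
      Multiset.count_eq_zero_of_notMem
        ((hz.of_move hzz').notMem_factors (by have := hz.size_of_move hzz'; lia))
    have := congrArg (Multiset.count m) heq
    rwa [Multiset.count_add, Multiset.count_add, hcount (hs x hx).1 hxx' (hsm x hx),
      hcount (ht y hy).1 hyy' (htm y hy)] at this

theorem eq_singleton_of_sum_indecomposable (ht : ∀ x ∈ t, Indecomposable x)
    (hm : Indecomposable m) (h : t.sum = m) : t = {m} := by
  obtain ⟨y, hy⟩ := Multiset.exists_mem_of_ne_zero (s := t) (by rintro rfl; exact hm.2.1 h.symm)
  have hrest : ∀ z ∈ t.erase y, Indecomposable z :=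
    fun z hz => ht z (Multiset.mem_of_mem_erase hz)
  have hrest_fin : ∀ z ∈ t.erase y, IsFin z := fun z hz => (hrest z hz).1
  have hrest0 : (t.erase y).sum = 0 :=
    (hm.2.2 y _ (ht y hy).1 (isFin_sum hrest_fin) (by rw [Multiset.sum_erase hy, h])).resolve_left
      (ht y hy).2.1
  have hrest_empty : t.erase y = 0 := Multiset.eq_zero_of_forall_notMem fun z hz => by
    have hle := size_le_size_sum hrest_fin hz
    have hpos := (hrest z hz).1.size_pos (hrest z hz).2.1
    rw [hrest0, size_zero] at hle
    lia
  rw [← Multiset.sum_erase hy, hrest0, add_zero] at h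
  rw [← Multiset.cons_erase hy, hrest_empty, h, Multiset.cons_zero]

theorem eq_of_sum_eq_sum_of_maximal_mem (hs : ∀ x ∈ s, Indecomposable x)
    (ht : ∀ x ∈ t, Indecomposable x) (h : s.sum = t.sum)
    (unique : UniqueFactorsBelow A s.sum.size)
    (hsm : ∀ x ∈ s, x.size ≤ m.size) (htm : ∀ x ∈ t, x.size ≤ m.size) (hm : m ∈ s) : s = t := by
  by_contra hne
  obtain ⟨y, -, hym, hcount⟩ := exists_count_erase_eq hs ht h unique hne hsm htm hm
  rw [Multiset.count_erase_self, Multiset.count_erase_of_ne hym.symm] at hcount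
  have hspos := Multiset.one_le_count_iff_mem.2 hm
  have hmt : m ∉ t := fun hmt => by
    obtain ⟨z, -, hzm, hcount'⟩ :=
      exists_count_erase_eq ht hs h.symm (h ▸ unique) (Ne.symm hne) htm hsm hmt
    rw [Multiset.count_erase_self, Multiset.count_erase_of_ne hzm.symm] at hcount'
    have := Multiset.one_le_count_iff_mem.2 hmt
    lia
  rw [Multiset.count_eq_zero_of_notMem hmt] at hcount
  have hothers : s.erase m = 0 := Multiset.eq_zero_of_forall_notMem fun x hx => by
    have hxm : x ≠ m := by
      rintro rfl
      have := Multiset.one_le_count_iff_mem.2 hx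
      rw [Multiset.count_erase_self] at this
      lia
    obtain ⟨z, -, -, hz⟩ :=
      exists_count_erase_eq hs ht h unique hne hsm htm (Multiset.mem_of_mem_erase hx)
    rw [Multiset.count_erase_of_ne hxm.symm] at hz
    have := Multiset.count_le_of_le m (Multiset.erase_le z t)
    rw [Multiset.count_eq_zero_of_notMem hmt] at this
    lia
  have hs_singleton : s = {m} := by
    rw [← Multiset.cons_erase hm, hothers, Multiset.cons_zero]
  refine hne (hs_singleton.trans (eq_singleton_of_sum_indecomposable ht (hs m hm) ?_).symm)
  rw [← h, hs_singleton, Multiset.sum_singleton]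

theorem eq_of_sum_eq_sum (hs : ∀ x ∈ s, Indecomposable x) (ht : ∀ x ∈ t, Indecomposable x)
    (h : s.sum = t.sum) : s = t := by
  induction hn : s.sum.size using Nat.strong_induction_on generalizing s t with | _ n ih =>
  have unique : UniqueFactorsBelow A s.sum.size :=
    fun s' t' hs' ht' hlt h' => ih _ (hn ▸ hlt) hs' ht' h' rfl
  by_contra hne
  obtain ⟨m, hm, hmax⟩ := Multiset.exists_max_image size (s := s + t) fun h0 =>
    hne (by rw [(add_eq_zero.1 h0).1, (add_eq_zero.1 h0).2])
  have hsm x (hx : x ∈ s) : x.size ≤ m.size := hmax x (Multiset.mem_add.2 (.inl hx))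
  have htm x (hx : x ∈ t) : x.size ≤ m.size := hmax x (Multiset.mem_add.2 (.inr hx))
  rcases Multiset.mem_add.1 hm with hms | hmt
  · exact hne (eq_of_sum_eq_sum_of_maximal_mem hs ht h unique hsm htm hms)
  · exact hne (eq_of_sum_eq_sum_of_maximal_mem ht hs h.symm (h ▸ unique) htm hsm hmt).symm

end Uniqueness

theorem factors_sum {s : Multiset (Behaviour A)} (hs : ∀ x ∈ s, Indecomposable x) :
    factors s.sum = s :=
  eq_of_sum_eq_sum (fun _ => indecomposable_of_mem_factors) hs
    (isFin_sum fun x hx => (hs x hx).1).sum_factors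

theorem factors_zero : factors (0 : Behaviour A) = 0 := factors_sum (s := 0) (by simp)

theorem Indecomposable.factors_eq {x : Behaviour A} (hx : Indecomposable x) :
    factors x = {x} := by
  simpa using factors_sum (s := {x}) (by simpa using hx)

theorem IsFin.factors_add {x y : Behaviour A} (hx : x.IsFin) (hy : y.IsFin) :
    factors (x + y) = factors x + factors y := by
  have := factors_sum (s := factors x + factors y) fun z hz =>
    (Multiset.mem_add.1 hz).elim indecomposable_of_mem_factors indecomposable_of_mem_factors
  rwa [Multiset.sum_add, hx.sum_factors, hy.sum_factors] at this

theorem eq_of_mem_factors_mk_pre {a : A} {p : Proc A} (hp : p.IsFin) {m : Behaviour A}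
    (hm : m ∈ factors ⟪pre a p⟫) (hmax : ∀ x ∈ factors ⟪pre a p⟫, x.size ≤ m.size) :
    ∀ x ∈ factors ⟪pre a p⟫, x = m := by
  have hpre : IsFin ⟪pre a p⟫ := isFin_mk (p := pre a p) hp
  have hcount x (hx : x ∈ factors ⟪pre a p⟫) :
      (factors ⟪p⟫).count m = ((factors ⟪pre a p⟫).erase x).count m := by
    have hind := indecomposable_of_mem_factors hx
    obtain ⟨b, x', hxx'⟩ := hind.1.exists_move hind.2.1
    have hmove := move_sum_of_mem hx hxx'
    rw [hpre.sum_factors] at hmove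
    have hrest : ∀ y ∈ (factors ⟪pre a p⟫).erase x, Indecomposable y :=
      fun y hy => indecomposable_of_mem_factors (Multiset.mem_of_mem_erase hy)
    have hx' := hind.1.of_move hxx'
    have hlt : x'.size < m.size := by
      have := hind.1.size_of_move hxx'
      have := hmax x hx
      lia
    rw [← (move_pre_iff.1 hmove).2,
      hx'.factors_add (isFin_sum fun y hy => (hrest y hy).1),
      factors_sum hrest, Multiset.count_add,
      Multiset.count_eq_zero_of_notMem (hx'.notMem_factors hlt), zero_add]
  intro x hx
  by_contra hxm
  have hpos := Multiset.one_le_count_iff_mem.2 hm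
  have hcount_eq := (hcount x hx).symm.trans (hcount m hm)
  rw [Multiset.count_erase_self, Multiset.count_erase_of_ne (Ne.symm hxm)] at hcount_eq
  lia

theorem exists_mk_pre_eq_nsmul (a : A) {p : Proc A} (hp : p.IsFin) :
    ∃ n x, Indecomposable x ∧ ⟪pre a p⟫ = (n + 1) • x := by
  have hsum := (isFin_mk (p := pre a p) hp).sum_factors
  have hne : factors ⟪pre a p⟫ ≠ 0 := fun h0 =>
    mk_pre_ne_zero a p (by rw [← hsum, h0, Multiset.sum_zero])
  obtain ⟨m, hm, hmax⟩ := Multiset.exists_max_image size hne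
  obtain ⟨n, hn⟩ := Nat.exists_eq_succ_of_ne_zero fun hc => hne (Multiset.card_eq_zero.1 hc)
  refine ⟨n, m, indecomposable_of_mem_factors hm, ?_⟩
  rw [← hsum, Multiset.eq_replicate_of_mem (eq_of_mem_factors_mk_pre hp hm hmax), hn,
    Multiset.sum_replicate]

end Behaviour

/-! ### Soundness and completeness of `≡D` -/

section ReplOnly

variable {S : Proc A}

theorem ReplOnly.move_iff (hS : ReplOnly S) {a : A} {z : Behaviour A} :
    ⟪S⟫.Move a z ↔ ∃ G, TopRepl S a G ∧ z = ⟪S⟫ + ⟪G⟫ := by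
  induction S generalizing z with
  | nil => exact iff_of_false Behaviour.not_move_zero (by rintro ⟨_, h, -⟩; cases h)
  | pre => exact hS.elim
  | repl b G =>
    rw [Behaviour.move_repl_iff]
    constructor
    · rintro ⟨rfl, rfl⟩
      exact ⟨G, .repl a G, rfl⟩
    · rintro ⟨_, h, rfl⟩
      cases h
      exact ⟨rfl, rfl⟩
  | par p q ihp ihq =>
    rw [Behaviour.mk_par, Behaviour.move_add_iff]
    constructor
    · rintro (⟨_, h, rfl⟩ | ⟨_, h, rfl⟩)
      · obtain ⟨G, hG, rfl⟩ := (ihp hS.1).1 h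
        exact ⟨G, .parL q hG, add_right_comm _ _ _⟩
      · obtain ⟨G, hG, rfl⟩ := (ihq hS.2).1 h
        exact ⟨G, .parR p hG, (add_assoc _ _ _).symm⟩
    · rintro ⟨G, hG | hG | hG, rfl⟩
      · exact .inl ⟨_, (ihp hS.1).2 ⟨G, ‹_›, rfl⟩, add_right_comm _ _ _⟩
      · exact .inr ⟨_, (ihq hS.2).2 ⟨G, ‹_›, rfl⟩, add_assoc _ _ _⟩

theorem ReplOnly.move_add_iff (hS : ReplOnly S) {a : A} {x z : Behaviour A} :
    (⟪S⟫ + x).Move a z ↔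
      (∃ G, TopRepl S a G ∧ z = ⟪S⟫ + (⟪G⟫ + x)) ∨ ∃ x', x.Move a x' ∧ z = ⟪S⟫ + x' := by
  rw [Behaviour.move_add_iff]
  refine or_congr_left ⟨?_, ?_⟩
  · rintro ⟨_, h, rfl⟩
    obtain ⟨G, hG, rfl⟩ := hS.move_iff.1 h
    exact ⟨G, hG, add_assoc _ _ _⟩
  · rintro ⟨G, hG, rfl⟩
    exact ⟨_, hS.move_iff.2 ⟨G, hG, rfl⟩, (add_assoc _ _ _).symm⟩

theorem TopRepl.move_add (hS : ReplOnly S) {a : A} {G : Proc A} (hG : TopRepl S a G)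
    (x : Behaviour A) : (⟪S⟫ + x).Move a (⟪S⟫ + (⟪G⟫ + x)) :=
  hS.move_add_iff.2 (.inl ⟨G, hG, rfl⟩)

theorem mk_repl_add_eq_of_add_eq (hS : ReplOnly S) {a : A} {p q : Proc A}
    (h : ⟪repl a p⟫ + ⟪S⟫ + ⟪p⟫ = ⟪repl a p⟫ + ⟪S⟫ + ⟪q⟫) :
    ⟪repl a p⟫ + ⟪S⟫ = ⟪repl a q⟫ + ⟪S⟫ := by
  have unfold_eq w : ⟪repl a p⟫ + ⟪p⟫ + (⟪S⟫ + w) = ⟪repl a p⟫ + (⟪S⟫ + (⟪q⟫ + w)) :=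
    calc ⟪repl a p⟫ + ⟪p⟫ + (⟪S⟫ + w) = ⟪repl a p⟫ + ⟪S⟫ + ⟪p⟫ + w := by abel
      _ = ⟪repl a p⟫ + (⟪S⟫ + (⟪q⟫ + w)) := by rw [h]; abel
  have unfold_eq' w : ⟪repl a q⟫ + ⟪q⟫ + (⟪S⟫ + w) = ⟪repl a q⟫ + (⟪S⟫ + (⟪q⟫ + w)) := by abel
  refine Behaviour.eq_of_simulations
    (fun x y => ∃ w, x = ⟪repl a p⟫ + (⟪S⟫ + w) ∧ y = ⟪repl a q⟫ + (⟪S⟫ + w)) ?_ ?_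
    ⟨0, by rw [add_zero], by rw [add_zero]⟩
  · rintro _ _ ⟨w, rfl, rfl⟩ b z hz
    obtain ⟨_, hrepl, rfl⟩ | ⟨_, hSw, rfl⟩ := Behaviour.move_add_iff.1 hz
    · obtain ⟨rfl, rfl⟩ := Behaviour.move_repl_iff.1 hrepl
      exact ⟨_, (Behaviour.move_repl b q).add_right _, .inr ⟨_, unfold_eq w, unfold_eq' w⟩⟩
    · refine ⟨_, hSw.add_left _, .inr ?_⟩
      obtain ⟨G, -, rfl⟩ | ⟨w', -, rfl⟩ := hS.move_add_iff.1 hSw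
      exacts [⟨_, rfl, rfl⟩, ⟨_, rfl, rfl⟩]
  · rintro _ _ ⟨w, rfl, rfl⟩ b z hz
    obtain ⟨_, hrepl, rfl⟩ | ⟨_, hSw, rfl⟩ := Behaviour.move_add_iff.1 hz
    · obtain ⟨rfl, rfl⟩ := Behaviour.move_repl_iff.1 hrepl
      exact ⟨_, (Behaviour.move_repl b p).add_right _, .inr ⟨_, unfold_eq w, unfold_eq' w⟩⟩
    · refine ⟨_, hSw.add_left _, .inr ?_⟩
      obtain ⟨G, -, rfl⟩ | ⟨w', -, rfl⟩ := hS.move_add_iff.1 hSw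
      exacts [⟨_, rfl, rfl⟩, ⟨_, rfl, rfl⟩]

end ReplOnly

theorem Behaviour.mk_repl_congr (a : A) {p q : Proc A} (h : ⟪p⟫ = ⟪q⟫) :
    ⟪repl a p⟫ = ⟪repl a q⟫ := by
  simpa [mk_nil] using mk_repl_add_eq_of_add_eq (S := nil) (a := a) (p := p) (q := q) trivial
    (by rw [h])

theorem EqD.mk_eq {p q : Proc A} (h : EqD p q) : ⟪p⟫ = ⟪q⟫ := by
  induction h with
  | refl => rfl
  | symm _ ih => exact ih.symm
  | trans _ _ ih₁ ih₂ => exact ih₁.trans ih₂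
  | parComm p q => exact add_comm ⟪p⟫ ⟪q⟫
  | parAssoc p q r => exact add_assoc ⟪p⟫ ⟪q⟫ ⟪r⟫
  | parNil p => exact add_zero ⟪p⟫
  | distr a p n => rw [Behaviour.mk_pre_par_reps, Behaviour.mk_reps]
  | congPre a _ ih => exact Behaviour.mk_pre_congr a ih
  | congPar _ _ ih₁ ih₂ => rw [Behaviour.mk_par, Behaviour.mk_par, ih₁, ih₂]
  | congRepl a _ ih => exact Behaviour.mk_repl_congr a ih

/-- The congruence `≡D` as a `ParCongr`. -/
def eqDCongr (A : Type) : ParCongr A where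
  r := EqD
  iseqv := ⟨.refl, .symm, .trans⟩
  par_congr := .congPar
  par_comm := .parComm
  par_assoc := .parAssoc
  par_nil := .parNil

namespace Behaviour

instance : Nonempty (Proc A) := ⟨nil⟩

/-- A chosen process `α.F` with the given behaviour, if there is one. -/
noncomputable def prefixForm : Behaviour A → Proc A :=
  Function.invFunOn mk {q | ∃ a p, p.IsFin ∧ q = pre a p}

theorem Indecomposable.prefixForm_spec {x : Behaviour A} (hx : Indecomposable x) :
    ∃ a p, p.IsFin ∧ prefixForm x = pre a p ∧ ⟪pre a p⟫ = x := by
  obtain ⟨b, q, hq, hxq⟩ := hx.exists_eq_pre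
  have hex : ∃ r ∈ {q | ∃ a p, Proc.IsFin p ∧ q = pre a p}, ⟪r⟫ = x :=
    ⟨pre b q, ⟨b, q, hq, rfl⟩, hxq.symm⟩
  obtain ⟨a, p, hp, heq⟩ := Function.invFunOn_mem hex
  exact ⟨a, p, hp, heq, by rw [← heq, Function.invFunOn_eq hex]⟩

/-- The `≡D`-class built from the indecomposable summands of a behaviour. -/
noncomputable def canonicalForm (x : Behaviour A) : (eqDCongr A).Classes :=
  ((factors x).map fun y => (eqDCongr A).classOf (prefixForm y)).sum

theorem canonicalForm_zero : canonicalForm (0 : Behaviour A) = 0 := by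
  rw [canonicalForm, factors_zero, Multiset.map_zero, Multiset.sum_zero]

theorem IsFin.canonicalForm_add {x y : Behaviour A} (hx : x.IsFin) (hy : y.IsFin) :
    canonicalForm (x + y) = canonicalForm x + canonicalForm y := by
  rw [canonicalForm, hx.factors_add hy, Multiset.map_add, Multiset.sum_add, canonicalForm,
    canonicalForm]

theorem Indecomposable.canonicalForm_eq {x : Behaviour A} (hx : Indecomposable x) :
    canonicalForm x = (eqDCongr A).classOf (prefixForm x) := by
  rw [canonicalForm, hx.factors_eq, Multiset.map_singleton, Multiset.sum_singleton]

theorem IsFin.nsmul {x : Behaviour A} (hx : x.IsFin) (n : ℕ) : (n • x).IsFin := by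
  induction n with
  | zero => rw [zero_nsmul]; exact isFin_zero
  | succ n ih => rw [succ_nsmul]; exact ih.add hx

theorem IsFin.canonicalForm_nsmul {x : Behaviour A} (hx : x.IsFin) (n : ℕ) :
    canonicalForm (n • x) = n • canonicalForm x := by
  induction n with
  | zero => rw [zero_nsmul, zero_nsmul, canonicalForm_zero]
  | succ n ih => rw [succ_nsmul, succ_nsmul, (hx.nsmul n).canonicalForm_add hx, ih]

end Behaviour

theorem Proc.IsFin.reps {p : Proc A} (hp : p.IsFin) (n : ℕ) : (reps n p).IsFin := by
  induction n with
  | zero => exact trivial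
  | succ n ih => exact ⟨hp, ih⟩

theorem classOf_pre_eq_canonicalForm (a : A) {p : Proc A} (hp : p.IsFin)
    (ih : ∀ q : Proc A, q.IsFin → q.size ≤ p.size →
      (eqDCongr A).classOf q = Behaviour.canonicalForm ⟪q⟫) :
    (eqDCongr A).classOf (pre a p) = Behaviour.canonicalForm ⟪pre a p⟫ := by
  obtain ⟨n, x, hx, hpx⟩ := Behaviour.exists_mk_pre_eq_nsmul a hp
  obtain ⟨b, q, hq, hxq, rfl⟩ := hx.prefixForm_spec
  set r := par q (reps n (pre b q))
  have hrfin : r.IsFin := ⟨hq, Proc.IsFin.reps (p := pre b q) hq n⟩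
  have hpr : ⟪pre a p⟫ = ⟪pre b r⟫ := by rw [hpx, Behaviour.mk_pre_par_reps]
  have hmove : ⟪pre b r⟫.Move a ⟪p⟫ := hpr ▸ Behaviour.move_pre a p
  obtain ⟨rfl, hpr'⟩ := Behaviour.move_pre_iff.1 hmove
  have hsize : p.size = r.size := (Behaviour.mk_eq_mk.1 hpr').size_eq hp hrfin
  have hD : EqD p r := (ParCongr.classOf_eq_classOf (c := eqDCongr A)).1 <| by
    rw [ih p hp le_rfl, ih r hrfin hsize.ge, hpr']
  calc (eqDCongr A).classOf (pre a p) = (eqDCongr A).classOf (reps (n + 1) (pre a q)) :=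
        ParCongr.classOf_eq_classOf.2 ((EqD.congPre a hD).trans (EqD.distr a q n hq))
    _ = (n + 1) • Behaviour.canonicalForm ⟪pre a q⟫ := by
        rw [ParCongr.classOf_reps, hx.canonicalForm_eq, hxq]
    _ = Behaviour.canonicalForm ⟪pre a p⟫ := by rw [hpx, hx.1.canonicalForm_nsmul]

theorem classOf_eq_canonicalForm {p : Proc A} (hp : p.IsFin) :
    (eqDCongr A).classOf p = Behaviour.canonicalForm ⟪p⟫ := by
  induction hn : p.size using Nat.strong_induction_on generalizing p with | _ n ih =>
  replace hn := hn.le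
  induction p with
  | nil => rw [Behaviour.mk_nil, Behaviour.canonicalForm_zero]; rfl
  | repl => exact hp.elim
  | pre a p =>
    exact classOf_pre_eq_canonicalForm a hp fun q hq hqp =>
      ih q.size (hqp.trans_lt hn) hq rfl
  | par p q ihp ihq =>
    rw [ParCongr.classOf_par, ihp hp.1 ((Nat.le_add_right _ _).trans hn),
      ihq hp.2 ((Nat.le_add_left _ _).trans hn),
      Behaviour.mk_par, (Behaviour.isFin_mk hp.1).canonicalForm_add (Behaviour.isFin_mk hp.2)]

theorem EqD.of_mk_eq {p q : Proc A} (hp : p.IsFin) (hq : q.IsFin) (h : ⟪p⟫ = ⟪q⟫) : EqD p q :=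
  (ParCongr.classOf_eq_classOf (c := eqDCongr A)).1 <| by
    rw [classOf_eq_canonicalForm hp, classOf_eq_canonicalForm hq, h]

/-! ### Absorption by replicated components -/

section Absorption

variable {S : Proc A}

theorem ReplOnly.add_pre_congr (hS : ReplOnly S) (a : A) {p q : Proc A}
    (h : ⟪S⟫ + ⟪p⟫ = ⟪S⟫ + ⟪q⟫) : ⟪S⟫ + ⟪pre a p⟫ = ⟪S⟫ + ⟪pre a q⟫ := by
  refine Behaviour.eq_of_symm_simulation
    (fun x y => ∃ w p q, ⟪S⟫ + ⟪p⟫ = ⟪S⟫ + ⟪q⟫ ∧ x = ⟪S⟫ + (w + ⟪pre a p⟫) ∧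
      y = ⟪S⟫ + (w + ⟪pre a q⟫)) ?_ ?_ ⟨0, p, q, h, by rw [zero_add], by rw [zero_add]⟩
  · rintro _ _ ⟨w, p, q, h, rfl, rfl⟩
    exact ⟨w, q, p, h.symm, rfl, rfl⟩
  · rintro _ _ ⟨w, p, q, h, rfl, rfl⟩ b z hz
    obtain ⟨G, hG, rfl⟩ | ⟨x', hx, rfl⟩ := hS.move_add_iff.1 hz
    · exact ⟨_, hG.move_add hS _, .inr ⟨⟪G⟫ + w, p, q, h, by rw [add_assoc], by rw [add_assoc]⟩⟩
    · obtain ⟨w', hw, rfl⟩ | ⟨_, hpre, rfl⟩ := Behaviour.move_add_iff.1 hx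
      · exact ⟨_, (hw.add_right _).add_left _, .inr ⟨w', p, q, h, rfl, rfl⟩⟩
      · obtain ⟨rfl, rfl⟩ := Behaviour.move_pre_iff.1 hpre
        exact ⟨_, ((Behaviour.move_pre b q).add_left w).add_left _,
          .inl (by rw [add_left_comm, h, add_left_comm])⟩

theorem ReplOnly.add_eq_self_of_add_add_eq_self (hS : ReplOnly S) {x y : Behaviour A}
    (h : ⟪S⟫ + (x + y) = ⟪S⟫) : ⟪S⟫ + x = ⟪S⟫ := by
  refine (Behaviour.eq_of_symm_simulation
    (fun u v => ∃ w x y, ⟪S⟫ + (x + y) = ⟪S⟫ ∧ u = ⟪S⟫ + w ∧ v = ⟪S⟫ + (w + x)) ?_ ?_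
    ⟨0, x, y, h, by rw [add_zero], by rw [zero_add]⟩).symm
  · rintro _ _ ⟨w, x, y, h, rfl, rfl⟩
    refine ⟨w + x, y, x, by rw [add_comm y x, h], rfl, ?_⟩
    calc ⟪S⟫ + w = ⟪S⟫ + (x + y) + w := by rw [h]
      _ = ⟪S⟫ + (w + x + y) := by abel
  · rintro _ _ ⟨w, x, y, h, rfl, rfl⟩ a z hz
    obtain ⟨w', rfl⟩ : ∃ w', z = ⟪S⟫ + w' := by
      obtain ⟨G, -, rfl⟩ | ⟨w', -, rfl⟩ := hS.move_add_iff.1 hz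
      exacts [⟨_, rfl⟩, ⟨w', rfl⟩]
    refine ⟨⟪S⟫ + (w' + x), ?_, .inr ⟨w', x, y, h, rfl, rfl⟩⟩
    simpa only [add_assoc] using hz.add_right x

theorem ReplOnly.add_succ_nsmul_eq_self_iff (hS : ReplOnly S) (n : ℕ) {x : Behaviour A} :
    ⟪S⟫ + (n + 1) • x = ⟪S⟫ ↔ ⟪S⟫ + x = ⟪S⟫ := by
  constructor
  · intro h
    exact hS.add_eq_self_of_add_add_eq_self (succ_nsmul' x n ▸ h)
  · intro h
    induction n with
    | zero => rwa [zero_add, one_nsmul]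
    | succ n ih => rw [succ_nsmul', ← add_assoc, h, ih]

/-- No subterm `α.F` of the process is absorbed by the behaviour `σ`. -/
def NoAbsorbedPrefix (σ : Behaviour A) : Proc A → Prop
  | nil => True
  | pre a p => σ + ⟪pre a p⟫ ≠ σ ∧ NoAbsorbedPrefix σ p
  | par p q => NoAbsorbedPrefix σ p ∧ NoAbsorbedPrefix σ q
  | repl _ p => NoAbsorbedPrefix σ p

theorem NoAbsorbedPrefix.of_step {σ : Behaviour A} {p p' : Proc A} {a : A}
    (hp : NoAbsorbedPrefix σ p) (h : Step p a p') : NoAbsorbedPrefix σ p' := by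
  induction h with
  | pre => exact hp.2
  | repl => exact ⟨hp, hp⟩
  | parL _ _ ih => exact ⟨ih hp.1, hp.2⟩
  | parR _ _ ih => exact ⟨hp.1, ih hp.2⟩

theorem NoAbsorbedPrefix.of_nSteps {σ : Behaviour A} {p p' : Proc A} {k : ℕ}
    (hp : NoAbsorbedPrefix σ p) (h : NSteps p k p') : NoAbsorbedPrefix σ p' := by
  induction h with
  | zero => exact hp
  | succ h _ ih => exact ih (hp.of_step h)

theorem EqD.noAbsorbedPrefix_iff (hS : ReplOnly S) {p q : Proc A} (h : EqD p q) :
    NoAbsorbedPrefix ⟪S⟫ p ↔ NoAbsorbedPrefix ⟪S⟫ q := by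
  induction h with
  | refl => rfl
  | symm _ ih => exact ih.symm
  | trans _ _ ih₁ ih₂ => exact ih₁.trans ih₂
  | parComm => exact and_comm
  | parAssoc => exact and_assoc
  | parNil => exact iff_of_eq (and_true _)
  | distr a p n =>
    rw [reps, NoAbsorbedPrefix, NoAbsorbedPrefix, NoAbsorbedPrefix, NoAbsorbedPrefix,
      Behaviour.mk_pre_par_reps, Ne, hS.add_succ_nsmul_eq_self_iff, and_assoc]
  | congPre a h ih => rw [NoAbsorbedPrefix, NoAbsorbedPrefix, (EqD.congPre a h).mk_eq, ih]
  | congPar _ _ ih₁ ih₂ => exact and_congr ih₁ ih₂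
  | congRepl _ _ ih => exact ih

theorem ReplOnly.exists_smaller_of_not_noAbsorbedPrefix (hS : ReplOnly S) {p : Proc A}
    (hp : p.IsFin) (h : ¬ NoAbsorbedPrefix ⟪S⟫ p) :
    ∃ q : Proc A, q.IsFin ∧ q.size < p.size ∧ ⟪S⟫ + ⟪p⟫ = ⟪S⟫ + ⟪q⟫ := by
  induction p with
  | nil => exact absurd trivial h
  | repl => exact hp.elim
  | pre a p ih =>
    rcases not_and_or.1 h with h | h
    · exact ⟨nil, trivial, Nat.succ_pos _, by rw [not_not.1 h, Behaviour.mk_nil, add_zero]⟩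
    · obtain ⟨q, hq, hlt, heq⟩ := ih hp h
      exact ⟨pre a q, hq, Nat.succ_lt_succ hlt, hS.add_pre_congr a heq⟩
  | par p r ihp ihr =>
    rcases not_and_or.1 h with h | h
    · obtain ⟨q, hq, hlt, heq⟩ := ihp hp.1 h
      refine ⟨par q r, ⟨hq, hp.2⟩, Nat.add_lt_add_right hlt _, ?_⟩
      rw [Behaviour.mk_par, Behaviour.mk_par, ← add_assoc, heq, add_assoc]
    · obtain ⟨q, hq, hlt, heq⟩ := ihr hp.2 h
      refine ⟨par p q, ⟨hp.1, hq⟩, Nat.add_lt_add_left hlt _, ?_⟩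
      rw [Behaviour.mk_par, Behaviour.mk_par, add_left_comm, heq, add_left_comm]

/-! ### Components of seeds -/

theorem ReplOnly.wf (hS : ReplOnly S) : S.Wf := by
  induction S with
  | nil => exact trivial
  | pre => exact hS.elim
  | par _ _ ihp ihq => exact ⟨ihp hS.1, ihq hS.2⟩
  | repl => exact hS

theorem TopRepl.isFin (hS : ReplOnly S) {a : A} {G : Proc A} (hG : TopRepl S a G) : G.IsFin := by
  induction hG with
  | repl => exact hS
  | parL _ _ ih => exact ih hS.1
  | parR _ _ ih => exact ih hS.2

theorem TopRepl.exists_eq_repl_add (hS : ReplOnly S) {a : A} {G : Proc A} (hG : TopRepl S a G) :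
    ∃ T, ReplOnly T ∧ ⟪S⟫ = ⟪Proc.repl a G⟫ + ⟪T⟫ ∧ S.size = (Proc.repl a G).size + T.size := by
  induction hG with
  | repl a G => exact ⟨nil, trivial, (add_zero _).symm, rfl⟩
  | parL q _ ih =>
    obtain ⟨T, hT, heq, hsize⟩ := ih hS.1
    refine ⟨par T q, ⟨hT, hS.2⟩, ?_, ?_⟩
    · rw [Behaviour.mk_par, Behaviour.mk_par, heq, add_assoc]
    · simp only [size] at hsize ⊢
      lia
  | parR p _ ih =>
    obtain ⟨T, hT, heq, hsize⟩ := ih hS.2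
    refine ⟨par p T, ⟨hS.1, hT⟩, ?_, ?_⟩
    · rw [Behaviour.mk_par, Behaviour.mk_par, heq, add_left_comm]
    · simp only [size] at hsize ⊢
      lia

/-- An absorbed prefix in a component could be erased, contradicting minimality of the seed. -/
theorem IsSeed.noAbsorbedPrefix_of_topRepl (hseed : IsSeed S) (hS : ReplOnly S) {a : A}
    {G : Proc A} (hG : TopRepl S a G) : NoAbsorbedPrefix ⟪S⟫ G := by
  by_contra hnot
  obtain ⟨H, hH, hlt, hGH⟩ := hS.exists_smaller_of_not_noAbsorbedPrefix (hG.isFin hS) hnot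
  obtain ⟨T, hT, hST, hsize⟩ := hG.exists_eq_repl_add hS
  rw [hST] at hGH
  have hbisim : Bisim (par (repl a H) T) S := Behaviour.mk_eq_mk.1 <| by
    rw [Behaviour.mk_par, hST, mk_repl_add_eq_of_add_eq hT hGH]
  have hmin := hseed.2 (par (repl a H) T) ⟨hH, hT.wf⟩ hbisim
  simp only [size] at hmin hsize
  lia

theorem ReplOnly.noAbsorbedPrefix {σ : Behaviour A} (hS : ReplOnly S)
    (h : ∀ a G, TopRepl S a G → NoAbsorbedPrefix σ G) : NoAbsorbedPrefix σ S := by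
  induction S with
  | nil => exact trivial
  | pre => exact hS.elim
  | repl a G => exact h a G (.repl a G)
  | par p q ihp ihq =>
    exact ⟨ihp hS.1 fun a G hG => h a G (.parL q hG), ihq hS.2 fun a G hG => h a G (.parR p hG)⟩

end Absorption

/-! ### Reachability -/

namespace Behaviour

/-- Reachability by a sequence of transitions. -/
def Reach : Behaviour A → Behaviour A → Prop :=
  Relation.ReflTransGen fun x y => ∃ a, x.Move a y

theorem Move.reach {x y : Behaviour A} {a : A} (h : x.Move a y) : x.Reach y := .single ⟨a, h⟩

theorem Reach.exists_add_of_add {x y z : Behaviour A} (h : (x + y).Reach z) :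
    ∃ x' y', x.Reach x' ∧ y.Reach y' ∧ z = x' + y' := by
  induction h with
  | refl => exact ⟨x, y, .refl, .refl, rfl⟩
  | tail _ hmove ih =>
    obtain ⟨x', y', hx, hy, rfl⟩ := ih
    obtain ⟨a, hmove⟩ := hmove
    obtain ⟨x'', hx', rfl⟩ | ⟨y'', hy', rfl⟩ := move_add_iff.1 hmove
    · exact ⟨x'', y', hx.trans hx'.reach, hy, rfl⟩
    · exact ⟨x', y'', hx, hy.trans hy'.reach, rfl⟩

theorem Reach.eq_zero {x : Behaviour A} (h : Reach 0 x) : x = 0 := by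
  induction h with
  | refl => rfl
  | tail _ hmove ih =>
    obtain ⟨a, hmove⟩ := hmove
    exact absurd (ih ▸ hmove) not_move_zero

theorem Reach.eq_or_of_pre {a : A} {p : Proc A} {x : Behaviour A} (h : Reach ⟪pre a p⟫ x) :
    x = ⟪pre a p⟫ ∨ Reach ⟪p⟫ x := by
  obtain rfl | ⟨y, ⟨b, hmove⟩, hy⟩ := Relation.ReflTransGen.cases_head h
  · exact .inl rfl
  · exact .inr ((move_pre_iff.1 hmove).2 ▸ hy)

theorem IsFin.of_reach {x y : Behaviour A} (hx : x.IsFin) (h : x.Reach y) : y.IsFin := by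
  induction h with
  | refl => exact hx
  | tail _ hmove ih => exact ih.of_move hmove.choose_spec

theorem IsFin.size_le_of_reach {x y : Behaviour A} (hx : x.IsFin) (h : x.Reach y) :
    y.size ≤ x.size := by
  induction h with
  | refl => rfl
  | tail hy hmove ih =>
    have := (hx.of_reach hy).size_of_move hmove.choose_spec
    lia

theorem IsFin.reach_of_add {x y : Behaviour A} (hy : y.IsFin) : (x + y).Reach x := by
  induction hn : y.size generalizing y with
  | zero =>
    rw [hy.eq_zero_of_size hn, add_zero]
    exact .refl
  | succ n ih =>
    obtain ⟨a, y', hmove⟩ := hy.exists_move (by rintro rfl; simp [size_zero] at hn)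
    have hsize := hy.size_of_move hmove
    exact (hmove.add_left x).reach.trans (ih (hy.of_move hmove) (by lia))

theorem Reach.exists_nSteps {p : Proc A} {x : Behaviour A} (h : Reach ⟪p⟫ x) :
    ∃ k q, NSteps p k q ∧ ⟪q⟫ = x := by
  generalize hy : ⟪p⟫ = y at h
  induction h using Relation.ReflTransGen.head_induction_on generalizing p with
  | refl => exact ⟨0, p, .zero p, hy⟩
  | head hmove _ ih =>
    obtain ⟨a, hmove⟩ := hmove
    subst hy
    obtain ⟨p', hstep, hp'⟩ := move_mk_iff.1 hmove
    obtain ⟨k, q, hq, hqx⟩ := ih hp'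
    exact ⟨k + 1, q, .succ hstep hq, hqx⟩

end Behaviour

theorem Proc.IsFin.of_nSteps {p q : Proc A} {k : ℕ} (hp : p.IsFin) (h : NSteps p k q) :
    q.IsFin := by
  induction h with
  | zero => exact hp
  | succ h _ ih => exact ih (hp.of_step h)

/-! ### Cancellation of reduced behaviours -/

/-- A finite behaviour that can reach no nonzero behaviour absorbed by `σ`. -/
def Reduced (σ x : Behaviour A) : Prop :=
  x.IsFin ∧ ∀ y, x.Reach y → σ + y = σ → y = 0

section Reduced

variable {S : Proc A} {x y : Behaviour A}

theorem Reduced.of_move {σ x' : Behaviour A} {a : A} (hx : Reduced σ x) (h : x.Move a x') :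
    Reduced σ x' :=
  ⟨hx.1.of_move h, fun y hy => hx.2 y (h.reach.trans hy)⟩

theorem Reduced.add (hS : ReplOnly S) (hx : Reduced ⟪S⟫ x) (hy : Reduced ⟪S⟫ y) :
    Reduced ⟪S⟫ (x + y) := by
  refine ⟨hx.1.add hy.1, fun z hz habs => ?_⟩
  obtain ⟨x', y', hx', hy', rfl⟩ := hz.exists_add_of_add
  rw [hx.2 x' hx' (hS.add_eq_self_of_add_add_eq_self habs),
    hy.2 y' hy' (hS.add_eq_self_of_add_add_eq_self (add_comm x' y' ▸ habs)), add_zero]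

theorem NoAbsorbedPrefix.reduced (hS : ReplOnly S) {p : Proc A} (hp : p.IsFin)
    (h : NoAbsorbedPrefix ⟪S⟫ p) : Reduced ⟪S⟫ ⟪p⟫ := by
  induction p with
  | nil => exact ⟨Behaviour.isFin_zero, fun y hy _ => hy.eq_zero⟩
  | repl => exact hp.elim
  | par p q ihp ihq => exact (ihp hp.1 h.1).add hS (ihq hp.2 h.2)
  | pre a p ih =>
    refine ⟨Behaviour.isFin_mk hp, fun y hy habs => ?_⟩
    rcases hy.eq_or_of_pre with rfl | hy
    exacts [absurd habs h.1, (ih hp h.2).2 y hy habs]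

theorem move_of_add_eq_add (hS : ReplOnly S) (hG : ∀ a G, TopRepl S a G → Reduced ⟪S⟫ ⟪G⟫)
    (hx : Reduced ⟪S⟫ x) (hy : Reduced ⟪S⟫ y) (hle : x.size ≤ y.size) (h : ⟪S⟫ + x = ⟪S⟫ + y)
    (cancel : ∀ u v, Reduced ⟪S⟫ u → Reduced ⟪S⟫ v → u.size < x.size → u.size ≤ v.size →
      ⟪S⟫ + u = ⟪S⟫ + v → u = v)
    {a : A} {x' : Behaviour A} (hmove : x.Move a x') : y.Move a x' := by
  have hx' := hx.of_move hmove
  have hx'size := hx.1.size_of_move hmove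
  have hSy : (⟪S⟫ + y).Move a (⟪S⟫ + x') := h ▸ hmove.add_left ⟪S⟫
  obtain ⟨G, hGS, heq⟩ | ⟨y', hy', heq⟩ := hS.move_add_iff.1 hSy
  · have hGy := (hG a G hGS).add hS hy
    have hGsize := (hG a G hGS).1.size_add hy.1
    have hx'_eq := cancel x' _ hx' hGy (by lia) (by lia) heq
    rw [hx'_eq] at hx'size
    lia
  · have hy'size := hy.1.size_of_move hy'
    rwa [cancel x' y' hx' (hy.of_move hy') (by lia) (by lia) heq]

theorem eq_of_add_eq_add_of_size_le (hS : ReplOnly S)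
    (hG : ∀ a G, TopRepl S a G → Reduced ⟪S⟫ ⟪G⟫) (hx : Reduced ⟪S⟫ x) (hy : Reduced ⟪S⟫ y)
    (hle : x.size ≤ y.size) (h : ⟪S⟫ + x = ⟪S⟫ + y) : x = y := by
  induction hn : x.size using Nat.strong_induction_on generalizing x y with | _ n ih =>
  subst hn
  have cancel u v (hu : Reduced ⟪S⟫ u) (hv : Reduced ⟪S⟫ v) (hlt : u.size < x.size)
      (hle : u.size ≤ v.size) (h : ⟪S⟫ + u = ⟪S⟫ + v) : u = v := ih _ hlt hu hv hle h rfl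
  by_cases hx0 : x = 0
  · rw [hx0, add_zero] at h
    rw [hx0, hy.2 y .refl h.symm]
  have forth {a x'} (hmove : x.Move a x') : y.Move a x' :=
    move_of_add_eq_add hS hG hx hy hle h cancel hmove
  have hsize : x.size = y.size := by
    obtain ⟨a, x', hmove⟩ := hx.1.exists_move hx0
    rw [hx.1.size_of_move hmove, hy.1.size_of_move (forth hmove)]
  refine Behaviour.ext_move fun a z => ⟨forth, fun hmove => ?_⟩
  exact move_of_add_eq_add hS hG hy hx hsize.ge h.symm (hsize ▸ cancel) hmove

theorem eq_of_add_eq_add (hS : ReplOnly S) (hG : ∀ a G, TopRepl S a G → Reduced ⟪S⟫ ⟪G⟫)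
    (hx : Reduced ⟪S⟫ x) (hy : Reduced ⟪S⟫ y) (h : ⟪S⟫ + x = ⟪S⟫ + y) : x = y := by
  rcases le_total x.size y.size with hle | hle
  · exact eq_of_add_eq_add_of_size_le hS hG hx hy hle h
  · exact (eq_of_add_eq_add_of_size_le hS hG hy hx hle h.symm).symm

theorem reduced_of_not_reach (hS : ReplOnly S) (hG : ∀ a G, TopRepl S a G → Reduced ⟪S⟫ ⟪G⟫)
    (hx : x.IsFin) (hdis : ∀ a G, TopRepl S a G → ¬ x.Reach ⟪pre a G⟫) : Reduced ⟪S⟫ x := by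
  induction hn : x.size using Nat.strong_induction_on generalizing x with | _ n ih =>
  refine ⟨hx, fun y hxy habs => by_contra fun hy0 => ?_⟩
  obtain ⟨a, p, w, hp, hw, rfl⟩ := (hx.of_reach hxy).exists_eq_pre_add hy0
  have hxpre : x.Reach ⟪pre a p⟫ := hxy.trans hw.reach_of_add
  have hxp : x.Reach ⟪p⟫ := hxpre.trans (Behaviour.move_pre a p).reach
  have habs_pre : ⟪S⟫ + ⟪pre a p⟫ = ⟪S⟫ := hS.add_eq_self_of_add_add_eq_self habs
  have hSp := (Behaviour.move_pre a p).add_left ⟪S⟫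
  rw [habs_pre] at hSp
  obtain ⟨H, hH, heq⟩ := hS.move_iff.1 hSp
  have hlt : Behaviour.size ⟪p⟫ < n := by
    have := hx.size_le_of_reach hxpre
    rw [Behaviour.size_mk_pre a hp] at this
    lia
  have hpred : Reduced ⟪S⟫ ⟪p⟫ := ih _ hlt (Behaviour.isFin_mk hp)
    (fun b K hK hreach => hdis b K hK (hxp.trans hreach)) rfl
  have hpH : ⟪p⟫ = ⟪H⟫ := eq_of_add_eq_add hS hG hpred (hG a H hH) heq
  exact hdis a H hH (Behaviour.mk_pre_congr a hpH ▸ hxpre)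

end Reduced

theorem Dis.not_reach {S F : Proc A} (hdis : Dis S F) (hS : ReplOnly S) (hF : F.IsFin) {a : A}
    {G : Proc A} (hG : TopRepl S a G) : ¬ Behaviour.Reach ⟪F⟫ ⟪pre a G⟫ := fun hreach => by
  obtain ⟨k, F', hsteps, heq⟩ := hreach.exists_nSteps
  exact hdis a G hG k
    ⟨F', hsteps, .of_mk_eq (hF.of_nSteps hsteps) (q := pre a G) (hG.isFin hS) heq⟩

theorem Purg.noAbsorbedPrefix {S R : Proc A} (hpurg : Purg S R) (hS : ReplOnly S)
    (h : NoAbsorbedPrefix ⟪S⟫ S) : NoAbsorbedPrefix ⟪S⟫ R := by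
  obtain ⟨k, -, P, hsteps, hP⟩ := hpurg
  exact ((hP.noAbsorbedPrefix_iff hS).1 (h.of_nSteps hsteps)).2

end CCS

theorem cancel_F_R_general {A : Type} (S F R : CCS.Proc A) (hS : CCS.ReplOnly S)
    (hseed : CCS.IsSeed S) (hF : F.IsFin) (hR : R.IsFin)
    (h : CCS.Bisim (CCS.Proc.par S F) (CCS.Proc.par S R))
    (hdis : CCS.Dis S F) (hpurg : CCS.Purg S R) : CCS.Bisim F R := by
  have hG a G (hG : CCS.TopRepl S a G) : CCS.NoAbsorbedPrefix (.mk S) G :=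
    hseed.noAbsorbedPrefix_of_topRepl hS hG
  have hG_reduced a G (hGS : CCS.TopRepl S a G) : CCS.Reduced (.mk S) (.mk G) :=
    (hG a G hGS).reduced hS (hGS.isFin hS)
  have hR_reduced : CCS.Reduced (.mk S) (.mk R) :=
    (hpurg.noAbsorbedPrefix hS (hS.noAbsorbedPrefix hG)).reduced hS hR
  have hF_reduced : CCS.Reduced (.mk S) (.mk F) :=
    CCS.reduced_of_not_reach hS hG_reduced (CCS.Behaviour.isFin_mk hF) fun _ _ hGS =>
      hdis.not_reach hS hF hGS
  have hsum : CCS.Behaviour.mk S + .mk F = .mk S + .mk R := CCS.Behaviour.mk_eq_mk.2 h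
  exact CCS.Behaviour.mk_eq_mk.1
    (CCS.eq_of_add_eq_add hS hG_reduced hF_reduced hR_reduced hsum)

/-- If `S | F ~ S | R`, `S ⫫ F` and `S ▷ R`, then `F ~ R`. -/
theorem cancel_F_R {A : Type} [Countable A]
    (S F R : CCS.Proc A) (hS : CCS.ReplOnly S) (hseed : CCS.IsSeed S)
    (hF : F.IsFin) (hR : R.IsFin)
    (h : CCS.Bisim (CCS.Proc.par S F) (CCS.Proc.par S R))
    (hdis : CCS.Dis S F) (hpurg : CCS.Purg S R) :
    CCS.Bisim F R :=
  cancel_F_R_general S F R hS hseed hF hR h hdis hpurg
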